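/- Assume p^2·e_0 − (p+1)·b_2 + (p−1)·b_1 > 0. Then π_0^{−w_j}·Ψ^{(j)}·ρ_r ∈ 𝔒_2 for all 0 ≤ r, j < p^2. -/

import Mathlib

/-- A normalized discrete valuation on a field `K`, recorded as a function
`v : K → ℤ`.  The value of `v` at `0` is irrelevant: all conditions below only
refer to nonzero elements (the convention `v 0 = ∞` being understood). -/
structure IsDiscVal {K : Type*} [Field K] (v : K → ℤ) : Prop where
  map_one : v 1 = 0
  map_mul : ∀ x y : K, x ≠ 0 → y ≠ 0 → v (x * y) = v x + v y
  min_le_add : ∀ x y : K, x ≠ 0 → y ≠ 0 → x + y ≠ 0 → min (v x) (v y) ≤ v (x + y)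
  exists_uniformizer : ∃ π : K, π ≠ 0 ∧ v π = 1

namespace IsDiscVal

open Finset

section Filtration

variable {K : Type*} [Field K] {v : K → ℤ}

lemma map_neg_one (hv : IsDiscVal v) : v (-1) = 0 := by
  have h := hv.map_mul (-1) (-1) (by simp) (by simp)
  rw [neg_one_mul, neg_neg, hv.map_one] at h
  omega

lemma map_neg (hv : IsDiscVal v) {x : K} (hx : x ≠ 0) : v (-x) = v x := by
  rw [← neg_one_mul, hv.map_mul _ _ (by simp) hx, hv.map_neg_one, zero_add]

lemma map_pow (hv : IsDiscVal v) {x : K} (hx : x ≠ 0) (n : ℕ) : v (x ^ n) = n * v x := by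
  induction n with
  | zero => simp [hv.map_one]
  | succ n ih =>
    rw [pow_succ, hv.map_mul _ _ (pow_ne_zero n hx) hx, ih]
    push_cast
    ring

lemma map_inv (hv : IsDiscVal v) {x : K} (hx : x ≠ 0) : v x⁻¹ = -v x := by
  have h := hv.map_mul x x⁻¹ hx (inv_ne_zero hx)
  rw [mul_inv_cancel₀ hx, hv.map_one] at h
  omega

lemma map_zpow (hv : IsDiscVal v) {x : K} (hx : x ≠ 0) (n : ℤ) : v (x ^ n) = n * v x := by
  cases n with
  | ofNat n => simpa using hv.map_pow hx n
  | negSucc n =>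
    rw [zpow_negSucc, hv.map_inv (pow_ne_zero _ hx), hv.map_pow hx, Int.negSucc_eq]
    push_cast
    ring

/-- The elements of valuation at least `n`, including `0`. -/
def filt (hv : IsDiscVal v) (n : ℤ) : AddSubgroup K where
  carrier := {x | x = 0 ∨ n ≤ v x}
  zero_mem' := Or.inl rfl
  add_mem' := by
    rintro x y hx hy
    by_cases hx0 : x = 0
    · simpa [hx0] using hy
    by_cases hy0 : y = 0
    · simpa [hy0] using hx
    by_cases hxy : x + y = 0
    · exact Or.inl hxy
    · exact Or.inr ((le_min (hx.resolve_left hx0) (hy.resolve_left hy0)).trans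
        (hv.min_le_add x y hx0 hy0 hxy))
  neg_mem' := by
    rintro x (rfl | hx)
    · simp
    · by_cases hx0 : x = 0
      · simp [hx0]
      · exact Or.inr (by rwa [hv.map_neg hx0])

lemma mem_filt_of_le (hv : IsDiscVal v) {n : ℤ} {x : K} (h : n ≤ v x) : x ∈ hv.filt n := Or.inr h

lemma le_of_mem_filt (hv : IsDiscVal v) {n : ℤ} {x : K} (hx : x ≠ 0) (h : x ∈ hv.filt n) :
    n ≤ v x := h.resolve_left hx

lemma filt_mono (hv : IsDiscVal v) {m n : ℤ} (h : m ≤ n) {x : K} (hx : x ∈ hv.filt n) :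
    x ∈ hv.filt m := hx.imp id h.trans

lemma mul_mem_filt (hv : IsDiscVal v) {m n k : ℤ} {x y : K} (hx : x ∈ hv.filt m)
    (hy : y ∈ hv.filt n) (hk : k ≤ m + n) : x * y ∈ hv.filt k := by
  rcases hx with rfl | hx
  · simp
  rcases hy with rfl | hy
  · simp
  by_cases hx0 : x = 0
  · simp [hx0]
  by_cases hy0 : y = 0
  · simp [hy0]
  refine Or.inr ?_
  rw [hv.map_mul x y hx0 hy0]
  omega

lemma one_mem_filt (hv : IsDiscVal v) : (1 : K) ∈ hv.filt 0 := hv.mem_filt_of_le hv.map_one.ge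

lemma pow_mem_filt (hv : IsDiscVal v) {n : ℤ} {x : K} (hx : x ∈ hv.filt n) (k : ℕ) :
    x ^ k ∈ hv.filt (k * n) := by
  induction k with
  | zero => simpa using hv.one_mem_filt
  | succ k ih =>
    rw [pow_succ]
    exact hv.mul_mem_filt ih hx (by push_cast; linarith)

lemma natCast_mem_filt (hv : IsDiscVal v) (k : ℕ) : (k : K) ∈ hv.filt 0 := by
  induction k with
  | zero => simp
  | succ k ih => exact_mod_cast add_mem ih hv.one_mem_filt

lemma eq_zero_of_forall_mem_filt (hv : IsDiscVal v) {x : K} (h : ∀ n, x ∈ hv.filt n) : x = 0 := by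
  by_contra hx
  have := hv.le_of_mem_filt hx (h (v x + 1))
  omega

/-- An element of `filt n` not in `filt (n + 1)` has valuation exactly `n`. -/
lemma map_eq_of_mem_of_notMem (hv : IsDiscVal v) {n : ℤ} {x : K} (hx : x ∈ hv.filt n)
    (hx' : x ∉ hv.filt (n + 1)) : x ≠ 0 ∧ v x = n := by
  have hx0 : x ≠ 0 := fun h => hx' (h ▸ zero_mem _)
  refine ⟨hx0, ?_⟩
  have h1 := hv.le_of_mem_filt hx0 hx
  have h2 : ¬ n + 1 ≤ v x := fun h => hx' (Or.inr h)
  omega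

lemma notMem_filt (hv : IsDiscVal v) {n : ℤ} {x : K} (hx : x ≠ 0) (h : v x < n) :
    x ∉ hv.filt n := fun h' => absurd (hv.le_of_mem_filt hx h') (by omega)

/-- Adding an element of strictly larger valuation does not change the valuation. -/
lemma map_add_of_mem (hv : IsDiscVal v) {x y : K} (hx : x ≠ 0) (hy : y ∈ hv.filt (v x + 1)) :
    x + y ≠ 0 ∧ v (x + y) = v x := by
  refine hv.map_eq_of_mem_of_notMem
    (add_mem (hv.mem_filt_of_le le_rfl) (hv.filt_mono (by omega) hy)) fun h => ?_
  have := sub_mem h hy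
  rw [add_sub_cancel_right] at this
  exact hv.notMem_filt hx (by omega) this

/-- If one step up in the filtration is always possible below level `c`, then level `c` is
reached. -/
lemma mem_filt_of_step (hv : IsDiscVal v) {x : K} {s c : ℤ} (hx : x ∈ hv.filt s)
    (step : ∀ t, s ≤ t → t < c → x ∈ hv.filt t → x ∈ hv.filt (t + 1)) : x ∈ hv.filt c := by
  rcases le_total c s with h | h
  · exact hv.filt_mono h hx
  · induction c, h using Int.leInduction with
    | base => exact hx
    | succ c hc ih =>
      exact step c hc (by omega) (ih fun t h1 h2 h3 => step t h1 (by omega) h3)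

/-- A finite sum of terms with pairwise distinct valuations lies in `filt n` only if every term
does. -/
lemma mem_filt_of_sum_mem (hv : IsDiscVal v) {ι : Type*} [DecidableEq ι] (s : Finset ι)
    (y : ι → K) (hy : ∀ i ∈ s, ∀ j ∈ s, y i ≠ 0 → y j ≠ 0 → v (y i) = v (y j) → i = j) {n : ℤ}
    (h : ∑ i ∈ s, y i ∈ hv.filt n) : ∀ i ∈ s, y i ∈ hv.filt n := by
  classical
  by_contra! hcon
  obtain ⟨i₁, hi₁, hi₁'⟩ := hcon
  obtain ⟨i₀, hi₀, hmin⟩ := (s.filter fun i => y i ∉ hv.filt n).exists_min_image (fun i => v (y i))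
    ⟨i₁, by simp [hi₁, hi₁']⟩
  rw [Finset.mem_filter] at hi₀
  have ne0 : ∀ {x : K}, x ∉ hv.filt n → x ≠ 0 := fun hx h0 => hx (h0 ▸ zero_mem _)
  have hlt : v (y i₀) < n := by
    by_contra! h'
    exact hi₀.2 (Or.inr h')
  have hrest : ∑ i ∈ s.erase i₀, y i ∈ hv.filt (v (y i₀) + 1) := by
    refine sum_mem fun i hi => ?_
    rw [Finset.mem_erase] at hi
    by_cases hin : y i ∈ hv.filt n
    · exact hv.filt_mono (by omega) hin
    · have h1 := hmin i (by simp [hi.2, hin])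
      have h2 : v (y i₀) ≠ v (y i) := fun h' =>
        hi.1 (hy i hi.2 i₀ hi₀.1 (ne0 hin) (ne0 hi₀.2) h'.symm)
      exact hv.mem_filt_of_le (by omega)
  have := sub_mem (hv.filt_mono (by omega : v (y i₀) + 1 ≤ n) h) hrest
  rw [← Finset.add_sum_erase s y hi₀.1, add_sub_cancel_right] at this
  exact hv.notMem_filt (ne0 hi₀.2) (by omega) this

end Filtration

section FallingFactorial

variable {K : Type*} [Field K] {v : K → ℤ}

lemma prod_sub_mem_filt (hv : IsDiscVal v) {x : K} {b : ℤ} (hb : b ≤ 0) (hx : x ∈ hv.filt b)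
    (n : ℕ) : ∏ k ∈ range n, (x - (k : K)) ∈ hv.filt (n * b) := by
  induction n with
  | zero => simpa using hv.one_mem_filt
  | succ n ih =>
    rw [prod_range_succ]
    exact hv.mul_mem_filt ih (sub_mem hx (hv.filt_mono hb (hv.natCast_mem_filt n)))
      (by push_cast; linarith)

lemma prod_sub_ne_zero_and_map (hv : IsDiscVal v) {x : K} (hx : x ≠ 0) (hb : v x < 0)
    (n : ℕ) : ∏ k ∈ range n, (x - (k : K)) ≠ 0 ∧
      v (∏ k ∈ range n, (x - (k : K))) = n * v x := by
  induction n with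
  | zero => simpa using hv.map_one
  | succ n ih =>
    have h := hv.map_add_of_mem hx
      (neg_mem (hv.filt_mono (by omega : v x + 1 ≤ 0) (hv.natCast_mem_filt n)))
    rw [← sub_eq_add_neg] at h
    rw [prod_range_succ]
    refine ⟨mul_ne_zero ih.1 h.1, ?_⟩
    rw [hv.map_mul _ _ ih.1 h.1, ih.2, h.2]
    push_cast
    ring

/-- Perturbing the argument of a falling factorial. -/
lemma prod_add_sub_prod_mem_filt (hv : IsDiscVal v) {x y : K} {b c : ℤ} (hb : b ≤ 0)
    (hbc : b ≤ c) (hx : x ∈ hv.filt b) (hy : y ∈ hv.filt c) (n : ℕ) :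
    ∏ k ∈ range n, (x + y - (k : K)) - ∏ k ∈ range n, (x - (k : K)) ∈
      hv.filt (n * b - b + c) := by
  induction n with
  | zero => simp
  | succ n ih =>
    have hxy : x + y - (n : K) ∈ hv.filt b :=
      sub_mem (add_mem hx (hv.filt_mono hbc hy)) (hv.filt_mono hb (hv.natCast_mem_filt n))
    have h := add_mem (hv.mul_mem_filt (k := ((n + 1 : ℕ) : ℤ) * b - b + c) ih hxy
        (by push_cast; linarith))
      (hv.mul_mem_filt (k := ((n + 1 : ℕ) : ℤ) * b - b + c) (hv.prod_sub_mem_filt hb hx n) hy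
        (by push_cast; linarith))
    convert h using 1
    rw [prod_range_succ, prod_range_succ]
    ring

/-- The forward difference of a falling factorial. -/
lemma prod_add_one_sub_prod (x : K) (n : ℕ) :
    ∏ k ∈ range n, (x + 1 - (k : K)) - ∏ k ∈ range n, (x - (k : K)) =
      n * ∏ k ∈ range (n - 1), (x - (k : K)) := by
  cases n with
  | zero => simp
  | succ n =>
    rw [prod_range_succ', prod_range_succ, Nat.add_sub_cancel]
    have : ∏ k ∈ range n, (x + 1 - ((k + 1 : ℕ) : K)) = ∏ k ∈ range n, (x - (k : K)) :=
      prod_congr rfl fun k _ => by push_cast; ring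
    rw [this]
    push_cast
    ring

/-- The Chu–Vandermonde identity for falling factorials. -/
lemma sum_choose_mul_prod_sub (x y : K) (n : ℕ) :
    ∑ i ∈ range (n + 1), (n.choose i : K) * (∏ k ∈ range i, (y - (k : K))) *
      ∏ k ∈ range (n - i), (x - (k : K)) = ∏ k ∈ range n, (x + y - (k : K)) := by
  have h := Ring.descPochhammer_smeval_add n (Commute.all y x)
  have key : ∀ (z : K) (m : ℕ), (descPochhammer ℤ m).smeval z = ∏ k ∈ range m, (z - (k : K)) := by
    intro z m
    induction m with
    | zero => simp
    | succ m ih =>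
      rw [descPochhammer_succ_right, Polynomial.smeval_mul, ih, prod_range_succ]
      simp [Polynomial.smeval_sub, Polynomial.smeval_natCast]
  simp only [key] at h
  rw [add_comm x y, h, Finset.Nat.sum_antidiagonal_eq_sum_range_succ_mk]
  exact sum_congr rfl fun i _ => by simp [mul_assoc]

end FallingFactorial

section Ramified

variable {K0 K2 : Type*} [Field K0] [Field K2] [Algebra K0 K2] {v0 : K0 → ℤ} {v2 : K2 → ℤ}

lemma map_smul_eq {N : ℕ} (hv2 : IsDiscVal v2)
    (hram : ∀ x : K0, x ≠ 0 → v2 (algebraMap K0 K2 x) = N * v0 x) {c : K0} {x : K2} (hc : c ≠ 0)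
    (hx : x ≠ 0) : v2 (c • x) = N * v0 c + v2 x := by
  rw [Algebra.smul_def, hv2.map_mul _ _ (by simpa using hc) hx, hram c hc]

/-- In a totally ramified extension of degree `N`, a family of `N` elements whose valuations are
distinct modulo `N` is a basis adapted to the filtration. -/
lemma exists_eq_sum_smul {N : ℕ} (hv2 : IsDiscVal v2)
    (hram : ∀ x : K0, x ≠ 0 → v2 (algebraMap K0 K2 x) = N * v0 x) {ι : Type*} [Fintype ι]
    [FiniteDimensional K0 K2] (hN : Module.finrank K0 K2 = N) (hι : Fintype.card ι = N)
    (e : ι → K2) (he : ∀ i, e i ≠ 0) (hinj : ∀ i j, (N : ℤ) ∣ v2 (e i) - v2 (e j) → i = j)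
    (x : K2) : ∃ c : ι → K0, x = ∑ i, c i • e i ∧
      ∀ n, x ∈ hv2.filt n → ∀ i, c i • e i ∈ hv2.filt n := by
  classical
  have key : ∀ (c : ι → K0) (n : ℤ), ∑ i, c i • e i ∈ hv2.filt n →
      ∀ i, c i • e i ∈ hv2.filt n := by
    intro c n h i
    refine hv2.mem_filt_of_sum_mem univ _ (fun i _ j _ hi hj hij => hinj i j ?_) h i (mem_univ i)
    have hi := left_ne_zero_of_smul hi
    have hj := left_ne_zero_of_smul hj
    rw [map_smul_eq hv2 hram hi (he i), map_smul_eq hv2 hram hj (he j)] at hij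
    exact ⟨v0 (c j) - v0 (c i), by linarith⟩
  have hli : LinearIndependent K0 e := by
    rw [Fintype.linearIndependent_iff]
    intro c hc i
    have : c i • e i = 0 := hv2.eq_zero_of_forall_mem_filt fun n => key c n (by simp [hc]) i
    exact (smul_eq_zero.1 this).resolve_right (he i)
  have hspan : x ∈ Submodule.span K0 (Set.range e) := by
    rw [hli.span_eq_top_of_card_eq_finrank' (by rw [hι, hN])]
    trivial
  obtain ⟨c, hc⟩ := (Submodule.mem_span_range_iff_exists_fun K0).1 hspan
  exact ⟨c, hc.symm, fun n hn => key c n (hc ▸ hn)⟩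

/-- Automorphisms of a totally ramified extension preserve the filtration. -/
lemma algEquiv_mem_filt {N : ℕ} (hv0 : IsDiscVal v0) (hv2 : IsDiscVal v2)
    (hram : ∀ x : K0, x ≠ 0 → v2 (algebraMap K0 K2 x) = N * v0 x)
    [FiniteDimensional K0 K2] (hN : Module.finrank K0 K2 = N) (σ : K2 ≃ₐ[K0] K2) {n : ℤ}
    {x : K2} (hx : x ∈ hv2.filt n) : σ x ∈ hv2.filt n := by
  have hN0 : 0 < N := hN ▸ Module.finrank_pos
  obtain ⟨ϖ, hϖ, hϖv⟩ := hv2.exists_uniformizer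
  obtain ⟨π, hπ, hπv⟩ := hv0.exists_uniformizer
  have integral : ∀ y ∈ hv2.filt 0, σ y ∈ hv2.filt (-(N * |v2 (σ ϖ)|)) := by
    intro y hy
    obtain ⟨c, hc, hcm⟩ := exists_eq_sum_smul hv2 hram hN (Fintype.card_fin N)
      (fun i : Fin N => ϖ ^ (i : ℕ)) (fun i => pow_ne_zero _ hϖ) (by
        intro i j h
        simp only [hv2.map_pow hϖ, hϖv, mul_one] at h
        have := Int.eq_zero_of_abs_lt_dvd h (by rw [abs_lt]; omega)
        omega) y
    rw [hc, map_sum]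
    refine sum_mem fun i _ => ?_
    rw [map_smul]
    by_cases hci : c i = 0
    · simp [hci]
    have h1 := hv2.le_of_mem_filt (smul_ne_zero hci (pow_ne_zero _ hϖ)) (hcm 0 hy i)
    rw [map_smul_eq hv2 hram hci (pow_ne_zero _ hϖ), hv2.map_pow hϖ, hϖv] at h1
    have hi : ((i : ℕ) : ℤ) < N := by exact_mod_cast i.2
    have h2 : 0 ≤ v0 (c i) := by
      by_contra! h
      nlinarith
    have hσϖ : σ ϖ ≠ 0 := by simpa using hϖ
    refine hv2.mem_filt_of_le ?_
    rw [map_smul_eq hv2 hram hci (by simpa using pow_ne_zero _ hϖ), _root_.map_pow,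
      hv2.map_pow hσϖ]
    have h3 := neg_abs_le (v2 (σ ϖ))
    have h4 := abs_nonneg (v2 (σ ϖ))
    have h5 : (0 : ℤ) ≤ N * v0 (c i) := by positivity
    have h6 : (0 : ℤ) ≤ (i : ℕ) := by positivity
    nlinarith
  have integral' : ∀ y ∈ hv2.filt 0, σ y ∈ hv2.filt 0 := by
    intro y hy
    by_cases hy0 : σ y = 0
    · simp [hy0]
    refine hv2.mem_filt_of_le ?_
    by_contra! h
    set B : ℤ := N * |v2 (σ ϖ)|
    have hB : 0 ≤ B := by positivity
    have h1 := integral (y ^ (B.toNat + 1))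
      (by simpa using hv2.pow_mem_filt hy (B.toNat + 1))
    rw [_root_.map_pow] at h1
    have h2 := hv2.le_of_mem_filt (pow_ne_zero _ hy0) h1
    rw [hv2.map_pow hy0] at h2
    push_cast at h2
    rw [Int.toNat_of_nonneg hB] at h2
    nlinarith
  by_cases hx0 : x = 0
  · simp [hx0]
  have hπn : π ^ (-n) ≠ 0 := zpow_ne_zero _ hπ
  have hσx : σ x ≠ 0 := by simpa using hx0
  have h1 := integral' (π ^ (-n) • x ^ N) (hv2.mem_filt_of_le (by
    rw [map_smul_eq hv2 hram hπn (pow_ne_zero _ hx0), hv2.map_pow hx0, hv0.map_zpow hπ, hπv]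
    have := hv2.le_of_mem_filt hx0 hx
    nlinarith))
  rw [map_smul, _root_.map_pow] at h1
  have h2 := hv2.le_of_mem_filt (smul_ne_zero hπn (pow_ne_zero _ hσx)) h1
  rw [map_smul_eq hv2 hram hπn (pow_ne_zero _ hσx), hv2.map_pow hσx, hv0.map_zpow hπ, hπv] at h2
  refine hv2.mem_filt_of_le ?_
  by_contra! h
  have : (0 : ℤ) < N := by exact_mod_cast hN0
  nlinarith

/-- The linear operators that raise valuations by at least `c`. -/
def raising (hv2 : IsDiscVal v2) (c : ℤ) : AddSubgroup (Module.End K0 K2) where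
  carrier := {T | ∀ n, ∀ x ∈ hv2.filt n, T x ∈ hv2.filt (n + c)}
  zero_mem' := fun _ _ _ => zero_mem _
  add_mem' := fun hS hT n x hx => add_mem (hS n x hx) (hT n x hx)
  neg_mem' := fun hT n x hx => neg_mem (hT n x hx)

lemma apply_mem_filt (hv2 : IsDiscVal v2) {c n k : ℤ} {T : Module.End K0 K2}
    (hT : T ∈ hv2.raising c) {x : K2} (hx : x ∈ hv2.filt n) (hk : k ≤ n + c) :
    T x ∈ hv2.filt k := hv2.filt_mono hk (hT n x hx)

lemma raising_mono (hv2 : IsDiscVal v2) {c c' : ℤ} (h : c' ≤ c) {T : Module.End K0 K2}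
    (hT : T ∈ hv2.raising c) : T ∈ hv2.raising c' :=
  fun _ _ hx => hv2.apply_mem_filt hT hx (by omega)

lemma mul_mem_raising (hv2 : IsDiscVal v2) {c c' k : ℤ} {S T : Module.End K0 K2}
    (hS : S ∈ hv2.raising c) (hT : T ∈ hv2.raising c') (hk : k ≤ c + c') :
    S * T ∈ hv2.raising k :=
  fun n x hx => hv2.apply_mem_filt hS (hT n x hx) (by omega)

lemma one_mem_raising (hv2 : IsDiscVal v2) : (1 : Module.End K0 K2) ∈ hv2.raising 0 :=
  fun n x hx => by simpa using hx

lemma pow_mem_raising (hv2 : IsDiscVal v2) {c : ℤ} {T : Module.End K0 K2}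
    (hT : T ∈ hv2.raising c) (k : ℕ) : T ^ k ∈ hv2.raising (k * c) := by
  induction k with
  | zero => simpa using hv2.one_mem_raising
  | succ k ih =>
    rw [pow_succ]
    exact hv2.mul_mem_raising ih hT (by push_cast; linarith)

lemma smul_mem_raising (hv2 : IsDiscVal v2) {c c' k : ℤ} {a : K0} {T : Module.End K0 K2}
    (ha : algebraMap K0 K2 a ∈ hv2.filt c) (hT : T ∈ hv2.raising c') (hk : k ≤ c + c') :
    a • T ∈ hv2.raising k := by
  intro n x hx
  rw [LinearMap.smul_apply, Algebra.smul_def]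
  exact hv2.mul_mem_filt ha (hT n x hx) (by omega)

lemma natCast_mem_raising (hv2 : IsDiscVal v2) {c : ℤ} {k : ℕ}
    (hk : (k : K2) ∈ hv2.filt c) : (k : Module.End K0 K2) ∈ hv2.raising c := by
  intro n x hx
  rw [Module.End.natCast_apply, nsmul_eq_mul]
  exact hv2.mul_mem_filt hk hx (by omega)

/-- It suffices to test how an operator raises valuations on an adapted basis. -/
lemma mem_raising_of_basis {N : ℕ} (hv2 : IsDiscVal v2)
    (hram : ∀ x : K0, x ≠ 0 → v2 (algebraMap K0 K2 x) = N * v0 x) {ι : Type*} [Fintype ι]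
    [FiniteDimensional K0 K2] (hN : Module.finrank K0 K2 = N) (hι : Fintype.card ι = N)
    (e : ι → K2) (he : ∀ i, e i ≠ 0) (hinj : ∀ i j, (N : ℤ) ∣ v2 (e i) - v2 (e j) → i = j)
    {T : Module.End K0 K2} {c : ℤ} (hT : ∀ i, T (e i) ∈ hv2.filt (v2 (e i) + c)) :
    T ∈ hv2.raising c := by
  intro n x hx
  obtain ⟨a, ha, ham⟩ := exists_eq_sum_smul hv2 hram hN hι e he hinj x
  rw [ha, map_sum]
  refine sum_mem fun i _ => ?_
  by_cases hai : a i = 0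
  · simp [hai]
  have h := hv2.le_of_mem_filt (smul_ne_zero hai (he i)) (ham n hx i)
  rw [map_smul_eq hv2 hram hai (he i)] at h
  rw [map_smul, Algebra.smul_def]
  exact hv2.mul_mem_filt (hv2.mem_filt_of_le (hram _ hai).ge) (hT i) (by omega)

/-- A binomial expansion to a prime exponent, for an operator with nonnegative gain. -/
lemma one_add_pow_prime_sub_mem_raising (hv2 : IsDiscVal v2) {p : ℕ} (hp : p.Prime) {E c : ℤ}
    (hE : (p : K2) ∈ hv2.filt E) (hc : 0 ≤ c) {T : Module.End K0 K2} (hT : T ∈ hv2.raising c) :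
    (1 + T) ^ p - 1 - T ^ p ∈ hv2.raising (E + c) := by
  rw [(Commute.one_left T).add_pow_prime_eq' hp]
  have : (1 : Module.End K0 K2) ^ p + T ^ p +
      p * ∑ k ∈ Ioo 0 p, 1 ^ k * T ^ (p - k) * ((p.choose k / p : ℕ) : Module.End K0 K2) - 1 - T ^ p =
      p * ∑ k ∈ Ioo 0 p, T ^ (p - k) * ((p.choose k / p : ℕ) : Module.End K0 K2) := by
    simp
    abel
  rw [this]
  refine hv2.mul_mem_raising (hv2.natCast_mem_raising hE) (c' := c) (sum_mem fun k hk => ?_) le_rfl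
  rw [mem_Ioo] at hk
  refine hv2.mul_mem_raising (hv2.pow_mem_raising hT _)
    (hv2.natCast_mem_raising (hv2.natCast_mem_filt _)) ?_
  have : (1 : ℤ) ≤ (p - k : ℕ) := by omega
  nlinarith

end Ramified

section PrimePower

variable {K : Type*} [Field K] {v : K → ℤ}

/-- `((x + y) ^ p - x ^ p - y ^ p) / p`, as a polynomial expression. -/
def cross (p : ℕ) (x y : K) : K := ∑ k ∈ Ioo 0 p, x ^ k * y ^ (p - k) * ((p.choose k / p : ℕ) : K)

lemma add_pow_eq_cross {p : ℕ} (hp : p.Prime) (x y : K) :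
    (x + y) ^ p = x ^ p + y ^ p + p * cross p x y :=
  add_pow_prime_eq' hp x y

lemma cross_mem_filt (hv : IsDiscVal v) (p : ℕ) {x y : K} {a b c : ℤ}
    (hx : x ∈ hv.filt a) (hy : y ∈ hv.filt b) (h1 : c ≤ a + (p - 1) * b)
    (h2 : c ≤ (p - 1) * a + b) : cross p x y ∈ hv.filt c := by
  refine sum_mem fun k hk => ?_
  rw [mem_Ioo] at hk
  have hk1 : (1 : ℤ) ≤ k := by omega
  have hk2 : (k : ℤ) + 1 ≤ p := by omega
  refine hv.mul_mem_filt (hv.mul_mem_filt (hv.pow_mem_filt hx k) (hv.pow_mem_filt hy (p - k)) le_rfl)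
    (hv.natCast_mem_filt _) ?_
  rw [Nat.cast_sub hk.2.le]
  rcases le_total a b with h | h <;> nlinarith

/-- A root `y` of `y ^ p - y = a` lies in `filt n` if `a` lies in `filt (p * n)` with `n ≤ 0`. -/
lemma mem_filt_of_pow_sub (hv : IsDiscVal v) {p : ℕ} (hp : 2 ≤ p) {y : K} {n : ℤ} (hn : n ≤ 0)
    (h : y ^ p - y ∈ hv.filt (p * n)) : y ∈ hv.filt n := by
  by_cases hy : y = 0
  · simp [hy]
  refine hv.mem_filt_of_le ?_
  by_contra! hlt
  have hp' : (2 : ℤ) ≤ p := by exact_mod_cast hp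
  have h' := hv.map_add_of_mem (pow_ne_zero p hy) (y := -y)
    (neg_mem (hv.mem_filt_of_le (by rw [hv.map_pow hy]; nlinarith)))
  rw [← sub_eq_add_neg] at h'
  have := hv.le_of_mem_filt h'.1 h
  rw [h'.2, hv.map_pow hy] at this
  nlinarith

/-- A root `y` of `y ^ p - y = a` with `v a = p * n < 0` has valuation `n`. -/
lemma map_eq_of_pow_sub (hv : IsDiscVal v) {p : ℕ} (hp : 2 ≤ p) {y a : K} {n : ℤ} (hn : n < 0)
    (h : y ^ p - y = a) (ha : a ≠ 0) (hav : v a = p * n) : y ≠ 0 ∧ v y = n := by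
  have hp' : (2 : ℤ) ≤ p := by exact_mod_cast hp
  refine hv.map_eq_of_mem_of_notMem
    (hv.mem_filt_of_pow_sub hp hn.le (h ▸ hv.mem_filt_of_le hav.ge)) fun hy => ?_
  refine hv.notMem_filt ha (n := p * n + 1) (by omega) ?_
  rw [← h]
  exact sub_mem (hv.filt_mono (by nlinarith) (hv.pow_mem_filt hy p))
    (hv.filt_mono (by nlinarith) hy)

/-- Integers prime to `p` are units. -/
lemma map_natCast_eq_zero (hv : IsDiscVal v) {p k : ℕ} (hp : p.Prime)
    (hE : (p : K) ∈ hv.filt 1) (hk : ¬ p ∣ k) : (k : K) ≠ 0 ∧ v (k : K) = 0 := by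
  refine hv.map_eq_of_mem_of_notMem (hv.natCast_mem_filt k) fun h => ?_
  obtain ⟨a, b, hab⟩ := Nat.isCoprime_iff_coprime.2 ((hp.coprime_iff_not_dvd).2 hk)
  have int_mem : ∀ z : ℤ, (z : K) ∈ hv.filt 0 := by
    intro z
    cases z with
    | ofNat z => simpa using hv.natCast_mem_filt z
    | negSucc z => simpa using neg_mem (hv.natCast_mem_filt (z + 1))
  have h1 : (1 : K) ∈ hv.filt 1 := by
    have : (1 : K) = (a : K) * p + b * k := by exact_mod_cast congrArg (Int.cast (R := K)) hab.symm
    rw [this]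
    exact add_mem (hv.mul_mem_filt (int_mem a) hE (by omega))
      (hv.mul_mem_filt (int_mem b) h (by omega))
  exact hv.notMem_filt one_ne_zero (by rw [hv.map_one]; omega) h1

end PrimePower

section Generator

variable {K0 K2 : Type*} [Field K0] [Field K2] [Algebra K0 K2] {v2 : K2 → ℤ}

lemma pow_apply_sub_eq_sum (σ : K2 ≃ₐ[K0] K2) (y : K2) (k : ℕ) :
    (σ ^ k) y - y = ∑ i ∈ range k, (σ ^ i) (σ y - y) := by
  induction k with
  | zero => simp
  | succ k ih =>
    rw [sum_range_succ, ← ih, map_sub, pow_succ, AlgEquiv.mul_apply]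
    ring

lemma pow_algEquiv_mem_filt (hv2 : IsDiscVal v2) {σ : K2 ≃ₐ[K0] K2}
    (hσ : ∀ n, ∀ x ∈ hv2.filt n, σ x ∈ hv2.filt n) (k : ℕ) {n : ℤ} {x : K2}
    (hx : x ∈ hv2.filt n) : (σ ^ k) x ∈ hv2.filt n := by
  induction k with
  | zero => simpa using hx
  | succ k ih =>
    rw [pow_succ', AlgEquiv.mul_apply]
    exact hσ n _ ih

lemma map_cross (p : ℕ) (σ : K2 ≃ₐ[K0] K2) (x y : K2) :
    σ (cross p x y) = cross p (σ x) (σ y) := by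
  simp [cross]

/-- If `σ` moves a root of an Artin–Schreier equation by approximately `1`, then `σ ^ p` fixes
it. -/
lemma pow_prime_apply_eq_self (hv2 : IsDiscVal v2) {p : ℕ} (hp : p.Prime) {E b : ℤ}
    (hE : (p : K2) ∈ hv2.filt E) (hb : 0 ≤ b) (hEb : 1 ≤ E - (p - 1) * b) {σ : K2 ≃ₐ[K0] K2}
    (hσ : ∀ n, ∀ x ∈ hv2.filt n, σ x ∈ hv2.filt n) {x ε : K2} (hx : x ∈ hv2.filt (-b))
    (hfix : σ (x ^ p - x) = x ^ p - x) (hσx : σ x = x + 1 + ε) (hε : ε ∈ hv2.filt 1) :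
    (σ ^ p) x = x := by
  have hp2 : (2 : ℤ) ≤ p := by exact_mod_cast hp.two_le
  have hfix' : (σ ^ p) (x ^ p - x) = x ^ p - x := by
    have h := pow_apply_sub_eq_sum σ (x ^ p - x) p
    rw [hfix, sub_self] at h
    simpa [sub_eq_zero] using h
  set z := (σ ^ p) x - x with hz
  have hσz : (σ ^ p) x = x + z := by rw [hz]; ring
  have hz1 : z ∈ hv2.filt 1 := by
    have h : z = p + ∑ i ∈ range p, (σ ^ i) ε := by
      rw [hz, pow_apply_sub_eq_sum, hσx, show x + 1 + ε - x = 1 + ε by ring]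
      simp [sum_add_distrib]
    rw [h]
    exact add_mem (hv2.filt_mono (by nlinarith) hE)
      (sum_mem fun i _ => hv2.pow_algEquiv_mem_filt hσ i hε)
  have heq : z = z ^ p + p * cross p x z := by
    rw [map_sub, _root_.map_pow, hσz, add_pow_eq_cross hp] at hfix'
    linear_combination -hfix'
  have hz0 : z = 0 := hv2.eq_zero_of_forall_mem_filt fun n => by
    refine hv2.mem_filt_of_step (c := n) hz1 fun t ht _ hzt => ?_
    rw [heq]
    refine add_mem (hv2.filt_mono (by nlinarith) (hv2.pow_mem_filt hzt p)) ?_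
    exact hv2.mul_mem_filt hE
      (hv2.cross_mem_filt p (c := t - (p - 1) * b) hx hzt (by nlinarith) (by nlinarith)) (by omega)
  rw [hσz, hz0, add_zero]

/-- The telescoping sum of Witt cocycles: `σ ^ p` moves the second Witt coordinate by
approximately `1`. -/
lemma pow_prime_apply_sub_sub_one_mem (hv2 : IsDiscVal v2) {p : ℕ} (hp : p.Prime) {E b e : ℤ}
    (hp0 : (p : K2) ≠ 0) (hE : v2 (p : K2) = E) (hb : 0 ≤ b) (he : 0 ≤ e)
    (heb : 1 ≤ e - (p - 1) * b) (heE : 1 ≤ p * e - E) {σ : K2 ≃ₐ[K0] K2}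
    (hσ : ∀ n, ∀ x ∈ hv2.filt n, σ x ∈ hv2.filt n) {x y ε δ : K2} (hx : x ∈ hv2.filt (-b))
    (hσx : σ x = x + 1 + ε) (hε : ε ∈ hv2.filt e) (hfix : (σ ^ p) x = x)
    (hσy : σ y = y - cross p x 1 + δ) (hδ : δ ∈ hv2.filt 1) :
    (σ ^ p) y - y - 1 ∈ hv2.filt 1 := by
  have hp2 : (2 : ℤ) ≤ p := by exact_mod_cast hp.two_le
  have hpinv : (p : K2)⁻¹ ∈ hv2.filt (-E) := hv2.mem_filt_of_le (by rw [hv2.map_inv hp0, hE])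
  have hstep : ∀ i, -cross p ((σ ^ i) x) 1 =
      ((1 - (((σ ^ (i + 1)) x) ^ p - ((σ ^ i) x) ^ p)) * (p : K2)⁻¹) +
        (-(-(σ ^ i) ε) ^ p * (p : K2)⁻¹ - cross p ((σ ^ (i + 1)) x) (-(σ ^ i) ε)) := by
    intro i
    have h0 : (σ ^ (i + 1)) x = (σ ^ i) x + 1 + (σ ^ i) ε := by
      rw [pow_succ, AlgEquiv.mul_apply, hσx, map_add, map_add, _root_.map_one]
    have h1 := add_pow_eq_cross hp ((σ ^ i) x) 1
    have h2 := add_pow_eq_cross hp ((σ ^ (i + 1)) x) (-(σ ^ i) ε)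
    rw [show (σ ^ (i + 1)) x + -(σ ^ i) ε = (σ ^ i) x + 1 by rw [h0]; ring, h1] at h2
    field_simp
    linear_combination -h2 + one_pow (M := K2) p
  have hsum : (σ ^ p) y - y - 1 = ∑ i ∈ range p,
      (-(-(σ ^ i) ε) ^ p * (p : K2)⁻¹ - cross p ((σ ^ (i + 1)) x) (-(σ ^ i) ε) + (σ ^ i) δ) := by
    rw [pow_apply_sub_eq_sum, hσy, show y - cross p x 1 + δ - y = -cross p x 1 + δ by ring]
    simp only [map_add, _root_.map_neg, map_cross, _root_.map_one, hstep]
    simp only [sum_add_distrib, ← sum_mul, sum_sub_distrib]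
    have htel := sum_range_sub (fun i => ((σ ^ i) x) ^ p) p
    rw [sum_sub_distrib, hfix] at htel
    rw [htel]
    simp [hp0]
    ring
  rw [hsum]
  refine sum_mem fun i _ => add_mem (sub_mem ?_ ?_) (hv2.pow_algEquiv_mem_filt hσ i hδ)
  · have := neg_mem (hv2.pow_algEquiv_mem_filt hσ i hε)
    exact hv2.mul_mem_filt (neg_mem (hv2.pow_mem_filt this p)) hpinv (by omega)
  · exact hv2.cross_mem_filt p (hv2.pow_algEquiv_mem_filt hσ (i + 1) hx)
      (neg_mem (hv2.pow_algEquiv_mem_filt hσ i hε)) (by nlinarith) (by nlinarith)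

/-- An approximate translation by `1` of a root of an Artin–Schreier equation is automatically a
good approximation. -/
lemma apply_sub_sub_one_mem (hv2 : IsDiscVal v2) {p : ℕ} (hp : p.Prime) {E B : ℤ}
    (hE : (p : K2) ∈ hv2.filt E) (hE1 : 1 ≤ E) (hB : 0 ≤ B) {τ : K2 ≃ₐ[K0] K2} {y : K2}
    (hy : y ∈ hv2.filt (-B)) (hfix : τ (y ^ p - y) = y ^ p - y)
    (h1 : τ y - y - 1 ∈ hv2.filt 1) : τ y - y - 1 ∈ hv2.filt (E - (p - 1) * B) := by
  have hp2 : (2 : ℤ) ≤ p := by exact_mod_cast hp.two_le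
  set η := τ y - y - 1 with hη
  have hτ : τ y = y + (1 + η) := by rw [hη]; ring
  have heq : η = η ^ p + p * cross p 1 η + p * cross p y (1 + η) := by
    rw [map_sub, _root_.map_pow, hτ, add_pow_eq_cross hp, add_pow_eq_cross hp] at hfix
    linear_combination -hfix + one_pow (M := K2) p
  refine hv2.mem_filt_of_step (s := 1) h1 fun t ht htc hηt => ?_
  rw [heq]
  refine add_mem (add_mem (hv2.filt_mono (by nlinarith) (hv2.pow_mem_filt hηt p)) ?_) ?_
  · exact hv2.mul_mem_filt hE
      (hv2.cross_mem_filt p (c := t) hv2.one_mem_filt hηt (by nlinarith) (by nlinarith)) (by omega)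
  · exact hv2.mul_mem_filt hE (hv2.cross_mem_filt p (c := -((p - 1) * B)) hy
      (add_mem hv2.one_mem_filt (hv2.filt_mono (by omega) h1)) (by nlinarith) (by nlinarith))
      (by omega)

end Generator

section Scaffold

variable {K0 K2 : Type*} [Field K0] [Field K2] [Algebra K0 K2] {v0 : K0 → ℤ} {v2 : K2 → ℤ}

lemma add_pow_sub_pow_mem_filt (hv2 : IsDiscVal v2) {x y : K2} {b c : ℤ} (hbc : b ≤ c)
    (hx : x ∈ hv2.filt b) (hy : y ∈ hv2.filt c) (n : ℕ) :
    (x + y) ^ n - x ^ n ∈ hv2.filt (n * b - b + c) := by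
  induction n with
  | zero => simp
  | succ n ih =>
    have h := add_mem (hv2.mul_mem_filt (k := ((n + 1 : ℕ) : ℤ) * b - b + c) ih
        (add_mem hx (hv2.filt_mono hbc hy)) (by push_cast; linarith))
      (hv2.mul_mem_filt (k := ((n + 1 : ℕ) : ℤ) * b - b + c) (hv2.pow_mem_filt hx n) hy
        (by push_cast; linarith))
    convert h using 1
    ring

/-- An operator raises valuations by `c` as soon as it does so on the products of powers of `x`
and falling factorials of `X`. -/
lemma mem_raising_of_mul_prod [FiniteDimensional K0 K2] {p : ℕ} (hp : p.Prime)
    (hdeg : Module.finrank K0 K2 = p ^ 2) (hv2 : IsDiscVal v2)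
    (hram : ∀ x : K0, x ≠ 0 → v2 (algebraMap K0 K2 x) = ((p ^ 2 : ℕ) : ℤ) * v0 x)
    {b1 b2 m : ℤ} (hb1 : ¬ (p : ℤ) ∣ b1) (hb2 : b2 = (p : ℤ) ^ 2 * m + b1) (hb2pos : 0 < b2)
    {x X : K2} (hx0 : x ≠ 0) (hx : v2 x = -(p * b1)) (hX0 : X ≠ 0) (hX : v2 X = -b2)
    {T : Module.End K0 K2} {c : ℤ}
    (hT : ∀ i j : ℕ, i < p → T (x ^ j * ∏ k ∈ range i, (X - (k : K2))) ∈
      hv2.filt (j * -(p * b1) + i * -b2 + c)) : T ∈ hv2.raising c := by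
  have hval : ∀ i j : ℕ, x ^ j * ∏ k ∈ range i, (X - (k : K2)) ≠ 0 ∧
      v2 (x ^ j * ∏ k ∈ range i, (X - (k : K2))) = j * -(p * b1) + i * -b2 := by
    intro i j
    have h := hv2.prod_sub_ne_zero_and_map hX0 (by omega) i
    refine ⟨mul_ne_zero (pow_ne_zero j hx0) h.1, ?_⟩
    rw [hv2.map_mul _ _ (pow_ne_zero j hx0) h.1, h.2, hv2.map_pow hx0, hx, hX]
  have hpz : Prime (p : ℤ) := Nat.prime_iff_prime_int.1 hp
  have hp0 : (p : ℤ) ≠ 0 := hpz.ne_zero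
  have digit : ∀ a b : Fin p, (p : ℤ) ∣ b1 * ((b : ℕ) - (a : ℕ) : ℤ) → a = b := by
    intro a b h
    have := Int.eq_zero_of_abs_lt_dvd ((hpz.dvd_or_dvd h).resolve_left hb1)
      (by rw [abs_lt]; omega)
    omega
  refine mem_raising_of_basis hv2 hram hdeg (ι := Fin p × Fin p) (by simp [sq])
    (fun a => x ^ (a.2 : ℕ) * ∏ k ∈ range (a.1 : ℕ), (X - (k : K2)))
    (fun a => (hval _ _).1) ?_ (fun a => ?_)
  · rintro ⟨i, j⟩ ⟨i', j'⟩ h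
    simp only [(hval _ _).2, hb2] at h
    obtain ⟨q, hq⟩ := h
    push_cast at hq
    have hi : i = i' := digit i i' ⟨p * q - b1 * (j' - j : ℤ) - p * m * (i' - i : ℤ),
      by linear_combination hq⟩
    subst hi
    have hj : j = j' := digit j j' ⟨q, mul_left_cancel₀ hp0 (by linear_combination hq)⟩
    rw [hj]
  · rw [(hval _ _).2]
    exact hT _ _ a.1.2

/-- Iterating an approximate difference operator on falling factorials. -/
lemma pow_apply_prod_sub_mem (hv2 : IsDiscVal v2) {b c : ℤ} {X : K2} {Ψ : Module.End K0 K2}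
    (hΨ : Ψ ∈ hv2.raising b)
    (hstep : ∀ i : ℕ, Ψ (∏ k ∈ range i, (X - (k : K2))) -
      i * ∏ k ∈ range (i - 1), (X - (k : K2)) ∈ hv2.filt (i * -b + b + c)) (i n : ℕ) :
    (Ψ ^ n) (∏ k ∈ range i, (X - (k : K2))) -
      i.descFactorial n * ∏ k ∈ range (i - n), (X - (k : K2)) ∈ hv2.filt (i * -b + n * b + c) := by
  induction n with
  | zero => simp
  | succ n ih =>
    have h1 := hv2.apply_mem_filt hΨ ih (k := i * -b + (n + 1 : ℕ) * b + c) (by push_cast; linarith)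
    have h2 : (i.descFactorial n : K2) * (Ψ (∏ k ∈ range (i - n), (X - (k : K2))) -
        (i - n : ℕ) * ∏ k ∈ range (i - n - 1), (X - (k : K2))) ∈
          hv2.filt (i * -b + (n + 1 : ℕ) * b + c) := by
      rcases lt_or_ge i n with h | h
      · simp [Nat.descFactorial_of_lt h]
      · refine hv2.mul_mem_filt (hv2.natCast_mem_filt _) (hstep (i - n)) ?_
        rw [Nat.cast_sub h]
        push_cast
        linarith
    convert add_mem h1 h2 using 1
    have h3 : Ψ ((i.descFactorial n : K2) * ∏ k ∈ range (i - n), (X - (k : K2))) =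
        i.descFactorial n * Ψ (∏ k ∈ range (i - n), (X - (k : K2))) := by
      rw [← nsmul_eq_mul, map_nsmul, nsmul_eq_mul]
    rw [pow_succ', Module.End.mul_apply, map_sub, h3, Nat.descFactorial_succ, Nat.sub_sub]
    push_cast
    ring

/-- The truncated power `(1 + Ψ) ^ [μ]`. -/
def truncPow (p : ℕ) (μ : K0) (Ψ : Module.End K0 K2) : Module.End K0 K2 :=
  ∑ i ∈ range p, ((∏ k ∈ range i, (μ - (k : K0))) / (Nat.factorial i : K0)) • Ψ ^ i

lemma algebraMap_coeff_mem_filt (hv2 : IsDiscVal v2) {p : ℕ} (hp : p.Prime)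
    (hp1 : (p : K2) ∈ hv2.filt 1) {c : ℤ} (hc : c ≤ 0) {μ : K0}
    (hμ : algebraMap K0 K2 μ ∈ hv2.filt c) {n : ℕ} (hn : n < p) :
    algebraMap K0 K2 ((∏ k ∈ range n, (μ - (k : K0))) / (Nat.factorial n : K0)) ∈
      hv2.filt (n * c) := by
  have hfac := hv2.map_natCast_eq_zero hp hp1 (k := n.factorial)
    (by rw [hp.dvd_factorial]; omega)
  rw [map_div₀, map_prod, div_eq_mul_inv, map_natCast]
  simp only [map_sub, map_natCast]
  exact hv2.mul_mem_filt (hv2.prod_sub_mem_filt hc hμ n)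
    (hv2.mem_filt_of_le (hv2.map_inv hfac.1).ge) (by omega)

/-- The truncated power approximates translation by `μ` on falling factorials. -/
lemma truncPow_apply_prod_sub_mem [CharZero K2] (hv2 : IsDiscVal v2) {p : ℕ}
    (hp : p.Prime) (hp1 : (p : K2) ∈ hv2.filt 1) {b1 b2 c : ℤ} (hb1 : 0 ≤ b1) (hb : b1 ≤ b2)
    (hc : (p - 1) * b1 ≤ c) {μ : K0} (hμ : algebraMap K0 K2 μ ∈ hv2.filt (b1 - b2)) {X : K2}
    {Ψ : Module.End K0 K2} (hΨ : Ψ ∈ hv2.raising b2)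
    (hstep : ∀ i : ℕ, Ψ (∏ k ∈ range i, (X - (k : K2))) -
      i * ∏ k ∈ range (i - 1), (X - (k : K2)) ∈ hv2.filt (i * -b2 + b2 + c)) {i : ℕ}
    (hi : i < p) :
    truncPow p μ Ψ (∏ k ∈ range i, (X - (k : K2))) -
      ∏ k ∈ range i, (X + algebraMap K0 K2 μ - (k : K2)) ∈ hv2.filt (i * -b2 + p * b1) := by
  have hV : ∏ k ∈ range i, (X + algebraMap K0 K2 μ - (k : K2)) = ∑ n ∈ range p,
      algebraMap K0 K2 ((∏ k ∈ range n, (μ - (k : K0))) / (Nat.factorial n : K0)) *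
        (i.descFactorial n * ∏ k ∈ range (i - n), (X - (k : K2))) := by
    rw [← sum_choose_mul_prod_sub]
    rw [sum_subset (range_subset_range.2 hi) (by
      intro n _ hn
      rw [mem_range, not_lt] at hn
      rw [Nat.choose_eq_zero_of_lt (by omega)]
      simp)]
    refine sum_congr rfl fun n _ => ?_
    have : (n.factorial : K2) ≠ 0 := by exact_mod_cast n.factorial_ne_zero
    rw [Nat.descFactorial_eq_factorial_mul_choose, map_div₀, map_prod, map_natCast]
    simp only [map_sub, map_natCast]
    push_cast
    field_simp
  rw [hV, truncPow, LinearMap.sum_apply, ← sum_sub_distrib]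
  refine sum_mem fun n hn => ?_
  rw [mem_range] at hn
  rw [LinearMap.smul_apply, Algebra.smul_def, ← mul_sub]
  rcases Nat.eq_zero_or_pos n with rfl | hn0
  · simp
  refine hv2.mul_mem_filt (hv2.algebraMap_coeff_mem_filt hp hp1 (by omega) hμ hn)
    (hv2.pow_apply_prod_sub_mem hΨ hstep i n) ?_
  have : (1 : ℤ) ≤ n := by omega
  nlinarith

/-- The `p`-th power of the first scaffold operator approximates the second one. -/
lemma pow_prime_sub_mem_raising (hv2 : IsDiscVal v2) {p : ℕ} (hp : p.Prime) {E b1 b2 G g : ℤ}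
    (hE : (p : K2) ∈ hv2.filt E) (hE1 : 1 ≤ E) (hb1 : 0 ≤ b1) (hb : b1 ≤ b2) (hg : 0 ≤ g)
    (hG1 : G ≤ E) (hG2 : G ≤ E - (p - 1) * b2 + p * b1)
    {μ : K0} (hμ : algebraMap K0 K2 μ ∈ hv2.filt (b1 - b2)) {S Ψ1 Ψ2 : Module.End K0 K2}
    (hS : S ^ p = 1 + Ψ2) (hS2 : (1 + Ψ2) ^ p = 1) (hΨ2 : Ψ2 ∈ hv2.raising b2)
    (hΨ1 : Ψ1 = S * truncPow p μ Ψ2 - 1) (hΨ1r : Ψ1 ∈ hv2.raising g) :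
    Ψ2 ^ p ∈ hv2.raising (E + b2) ∧ Ψ1 ^ p - Ψ2 ∈ hv2.raising G ∧ Commute Ψ2 Ψ1 := by
  have hSΨ : Commute S Ψ2 := by
    have : Ψ2 = S ^ p - 1 := by rw [hS]; abel
    rw [this]
    exact ((Commute.refl S).pow_right p).sub_right (Commute.one_right S)
  have hcU : ∀ T : Module.End K0 K2, Commute T Ψ2 → Commute T (truncPow p μ Ψ2) :=
    fun T hT => Commute.sum_right _ _ _ fun i _ => (hT.pow_right i).smul_right _
  have hΨ2p : Ψ2 ^ p ∈ hv2.raising (E + b2) := by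
    have h := neg_mem (hv2.one_add_pow_prime_sub_mem_raising hp hE (hb1.trans hb) hΨ2)
    rwa [hS2, sub_self, zero_sub, neg_neg] at h
  set W : Module.End K0 K2 := ∑ i ∈ range (p - 1),
    ((∏ k ∈ range (i + 1), (μ - (k : K0))) / (Nat.factorial (i + 1) : K0)) • Ψ2 ^ i with hW
  have hU : truncPow p μ Ψ2 = 1 + Ψ2 * W := by
    rw [truncPow, ← Nat.sub_add_cancel hp.one_le, sum_range_succ', hW, mul_sum, add_comm]
    simp [pow_succ']
  have hWr : W ∈ hv2.raising (b1 - b2) := by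
    refine sum_mem fun i hi => ?_
    rw [mem_range] at hi
    refine hv2.smul_mem_raising (hv2.algebraMap_coeff_mem_filt hp (hv2.filt_mono hE1 hE)
      (by omega) hμ (by omega)) (hv2.pow_mem_raising hΨ2 i) ?_
    push_cast
    nlinarith
  have hWc : Commute Ψ2 W := Commute.sum_right _ _ _ fun i _ =>
    ((Commute.refl Ψ2).pow_right i).smul_right _
  have hVr : Ψ2 * W ∈ hv2.raising b1 := hv2.mul_mem_raising hΨ2 hWr (by omega)
  have hUp : truncPow p μ Ψ2 ^ p - 1 ∈ hv2.raising G := by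
    have h := add_mem
      (hv2.raising_mono (by omega) (hv2.one_add_pow_prime_sub_mem_raising hp hE hb1 hVr))
      (hv2.mul_mem_raising (k := G) hΨ2p (hv2.pow_mem_raising hWr p) (by linarith))
    rw [hU]
    rwa [← hWc.mul_pow, sub_add_cancel] at h
  refine ⟨hΨ2p, ?_, ?_⟩
  · have h1 := hv2.one_add_pow_prime_sub_mem_raising hp hE hg hΨ1r
    have h2 : (1 + Ψ1) ^ p = (1 + Ψ2) * truncPow p μ Ψ2 ^ p := by
      rw [hΨ1, add_sub_cancel, (hcU S hSΨ).mul_pow, hS]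
    have h3 : Ψ1 ^ p - Ψ2 = (1 + Ψ2) * (truncPow p μ Ψ2 ^ p - 1) -
        ((1 + Ψ1) ^ p - 1 - Ψ1 ^ p) := by
      rw [h2, mul_sub, mul_one]
      abel
    rw [h3]
    exact sub_mem (hv2.mul_mem_raising (add_mem hv2.one_mem_raising
      (hv2.raising_mono (hb1.trans hb) hΨ2)) hUp (by omega)) (hv2.raising_mono (by omega) h1)
  · rw [hΨ1]
    exact (hSΨ.symm.mul_right (hcU Ψ2 (Commute.refl Ψ2))).sub_right (Commute.one_right Ψ2)

/-- The valuation of the modified second generator `x2 - μ * x1`. -/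
lemma map_sub_mul_eq (hv2 : IsDiscVal v2) {p : ℕ} (hp : p.Prime) {E b1 m : ℤ}
    (hE : (p : K2) ∈ hv2.filt E) (hb1 : 0 < b1) (hm : 0 < m)
    (hEb : (p : ℤ) ^ 2 * b1 - p * b1 < E) (hmb : ((p : ℤ) ^ 2 - 1) * b1 < (p : ℤ) ^ 2 * m)
    {x1 x2 a μ : K2} (ha : v2 a = -((p : ℤ) ^ 2 * b1)) (hμ0 : μ ≠ 0)
    (hμ : v2 μ = -((p : ℤ) ^ 2 * m)) (hx1 : x1 ^ p - x1 = a) (hx10 : x1 ≠ 0)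
    (hx1v : v2 x1 = -(p * b1)) (hx2 : x2 ^ p - x2 = μ ^ p * a - cross p x1 a) :
    x2 ∈ hv2.filt (-((p : ℤ) ^ 2 * m + p * b1)) ∧ x2 - μ * x1 ≠ 0 ∧
      v2 (x2 - μ * x1) = -((p : ℤ) ^ 2 * m + b1) := by
  have hp2 : (2 : ℤ) ≤ p := by exact_mod_cast hp.two_le
  have hpb : 2 * b1 ≤ p * b1 := by nlinarith
  have hppb : 2 * (p * b1) ≤ (p : ℤ) ^ 2 * b1 := by nlinarith
  have hpppb : 2 * ((p : ℤ) ^ 2 * b1) ≤ (p : ℤ) ^ 3 * b1 := by nlinarith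
  have hpm : 2 * m ≤ p * m := by nlinarith
  have hppm : 2 * (p * m) ≤ (p : ℤ) ^ 2 * m := by nlinarith
  have hpppm : 2 * ((p : ℤ) ^ 2 * m) ≤ (p : ℤ) ^ 3 * m := by nlinarith
  have hmb' : (p : ℤ) ^ 3 * b1 - p * b1 < (p : ℤ) ^ 3 * m := by nlinarith
  have hcr : cross p x1 a ∈ hv2.filt (-(p * ((p : ℤ) ^ 2 * m + b1)) + 1) :=
    hv2.cross_mem_filt p (hv2.mem_filt_of_le hx1v.ge) (hv2.mem_filt_of_le ha.ge)
      (by linarith) (by linarith)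
  have hμx : μ * x1 ∈ hv2.filt (-((p : ℤ) ^ 2 * m + p * b1)) :=
    hv2.mul_mem_filt (hv2.mem_filt_of_le hμ.ge) (hv2.mem_filt_of_le hx1v.ge) (by linarith)
  have hx2m : x2 ∈ hv2.filt (-((p : ℤ) ^ 2 * m + p * b1)) := by
    refine hv2.mem_filt_of_pow_sub hp.two_le (by linarith) ?_
    rw [hx2]
    exact sub_mem (hv2.mul_mem_filt (hv2.pow_mem_filt (hv2.mem_filt_of_le hμ.ge) p)
      (hv2.mem_filt_of_le ha.ge) (by linarith)) (hv2.filt_mono (by linarith) hcr)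
  refine ⟨hx2m, ?_⟩
  have hlead0 : -(μ ^ p * x1) ≠ 0 := neg_ne_zero.2 (mul_ne_zero (pow_ne_zero p hμ0) hx10)
  have hlead : v2 (-(μ ^ p * x1)) = p * -((p : ℤ) ^ 2 * m + b1) := by
    rw [hv2.map_neg (mul_ne_zero (pow_ne_zero p hμ0) hx10),
      hv2.map_mul _ _ (pow_ne_zero p hμ0) hx10, hv2.map_pow hμ0, hμ, hx1v]
    ring
  have heq : (x2 - μ * x1) ^ p - (x2 - μ * x1) = -(μ ^ p * x1) +
      (-cross p x1 a + μ * x1 - p * cross p (x2 - μ * x1) (μ * x1)) := by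
    have h := add_pow_eq_cross hp (x2 - μ * x1) (μ * x1)
    rw [sub_add_cancel, mul_pow μ x1] at h
    linear_combination -h + hx2 - μ ^ p * hx1
  have hrest : -cross p x1 a + μ * x1 - p * cross p (x2 - μ * x1) (μ * x1) ∈
      hv2.filt (v2 (-(μ ^ p * x1)) + 1) := by
    rw [hlead]
    refine sub_mem (add_mem (neg_mem (hv2.filt_mono (by linarith) hcr))
      (hv2.filt_mono (by linarith) hμx)) ?_
    exact hv2.mul_mem_filt hE (hv2.cross_mem_filt p (c := -(p * ((p : ℤ) ^ 2 * m + p * b1)))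
      (sub_mem hx2m hμx) hμx (by linarith) (by linarith)) (by linarith)
  have htot := hv2.map_add_of_mem hlead0 hrest
  exact hv2.map_eq_of_pow_sub hp.two_le (by nlinarith) heq htot.1 (htot.2.trans hlead)

/-- An automorphism translating `X` by approximately `1` acts on falling factorials of `X` as an
approximate difference operator. -/
lemma sub_one_apply_prod_sub_mem (hv2 : IsDiscVal v2) {b c : ℤ} (hb : 0 ≤ b) (hc : 0 ≤ c)
    {τ : K2 ≃ₐ[K0] K2} {X : K2} (hX : X ∈ hv2.filt (-b)) (hτ : τ X - X - 1 ∈ hv2.filt c)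
    (i : ℕ) :
    ((τ.toLinearMap : Module.End K0 K2) - 1) (∏ k ∈ range i, (X - (k : K2))) -
      i * ∏ k ∈ range (i - 1), (X - (k : K2)) ∈ hv2.filt (i * -b + b + c) := by
  have h := hv2.prod_add_sub_prod_mem_filt (b := -b) (by omega) (by omega)
    (add_mem hX (hv2.filt_mono (by omega) hv2.one_mem_filt)) hτ i
  rw [show X + 1 + (τ X - X - 1) = τ X by ring, sub_neg_eq_add] at h
  convert h using 1
  rw [← prod_add_one_sub_prod]
  simp [map_prod]

/-- An operator commuting with multiplication by `x` that is an approximate difference operator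
on falling factorials of `X` raises valuations by `b`. -/
lemma mul_prod_mem_filt_of_step (hv2 : IsDiscVal v2) {b b' c : ℤ} (hb : 0 ≤ b) (hc : 0 ≤ c)
    {x X : K2} (hx : x ∈ hv2.filt b') (hX : X ∈ hv2.filt (-b)) {Ψ : Module.End K0 K2}
    (hΨx : ∀ j y, Ψ (x ^ j * y) = x ^ j * Ψ y)
    (hstep : ∀ i : ℕ, Ψ (∏ k ∈ range i, (X - (k : K2))) -
      i * ∏ k ∈ range (i - 1), (X - (k : K2)) ∈ hv2.filt (i * -b + b + c)) (i j : ℕ) :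
    Ψ (x ^ j * ∏ k ∈ range i, (X - (k : K2))) ∈ hv2.filt (j * b' + i * -b + b) := by
  rw [hΨx]
  refine hv2.mul_mem_filt (hv2.pow_mem_filt hx j) (n := i * -b + b) ?_ (by omega)
  rw [← sub_add_cancel (Ψ _) ((i : K2) * ∏ k ∈ range (i - 1), (X - (k : K2)))]
  refine add_mem (hv2.filt_mono (by omega) (hstep i)) ?_
  rcases Nat.eq_zero_or_pos i with rfl | hi
  · simp
  · refine hv2.mul_mem_filt (hv2.natCast_mem_filt i)
      (hv2.prod_sub_mem_filt (by omega) hX (i - 1)) ?_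
    rw [Nat.cast_sub hi]
    push_cast
    linarith

/-- The first scaffold operator on the adapted basis. -/
lemma mul_truncPow_sub_one_apply_mem [CharZero K2] (hv2 : IsDiscVal v2) {p : ℕ} (hp : p.Prime)
    (hp1 : (p : K2) ∈ hv2.filt 1) {b1 b2 c : ℤ} (hb1 : 0 ≤ b1) (hb : p * b1 ≤ b2)
    (hc : (p - 1) * b1 ≤ c) {μ : K0} (hμ : algebraMap K0 K2 μ ∈ hv2.filt (b1 - b2))
    {σ : K2 ≃ₐ[K0] K2} (hσ : ∀ n, ∀ x ∈ hv2.filt n, σ x ∈ hv2.filt n) {x X : K2}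
    (hx : x ∈ hv2.filt (-(p * b1))) (hσx : σ x - x ∈ hv2.filt 0) (hX : X ∈ hv2.filt (-b2))
    (hσX : σ X + algebraMap K0 K2 μ - X ∈ hv2.filt (-b2 + p * b1)) {Ψ : Module.End K0 K2}
    (hΨx : ∀ j y, Ψ (x ^ j * y) = x ^ j * Ψ y) (hΨ : Ψ ∈ hv2.raising b2)
    (hstep : ∀ i : ℕ, Ψ (∏ k ∈ range i, (X - (k : K2))) -
      i * ∏ k ∈ range (i - 1), (X - (k : K2)) ∈ hv2.filt (i * -b2 + b2 + c)) {i : ℕ}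
    (hi : i < p) (j : ℕ) :
    ((σ.toLinearMap : Module.End K0 K2) * truncPow p μ Ψ - 1)
      (x ^ j * ∏ k ∈ range i, (X - (k : K2))) ∈
        hv2.filt (j * -(p * b1) + i * -b2 + p * b1) := by
  have hp2 : (2 : ℤ) ≤ p := by exact_mod_cast hp.two_le
  have hpb : b1 ≤ p * b1 := by nlinarith
  have hpowx : ∀ (n j : ℕ) (y : K2), (Ψ ^ n) (x ^ j * y) = x ^ j * (Ψ ^ n) y := by
    intro n j y
    induction n with
    | zero => simp
    | succ n ih => rw [pow_succ', Module.End.mul_apply, ih, hΨx, Module.End.mul_apply]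
  have hUx : ∀ (j : ℕ) (y : K2), truncPow p μ Ψ (x ^ j * y) = x ^ j * truncPow p μ Ψ y := by
    intro j y
    simp only [truncPow, LinearMap.sum_apply, LinearMap.smul_apply, hpowx, mul_sum,
      mul_smul_comm]
  have hU := hσ _ _ (hv2.truncPow_apply_prod_sub_mem hp hp1 hb1 (hpb.trans hb) hc hμ hΨ hstep hi)
  have hshift := hv2.prod_add_sub_prod_mem_filt (b := -b2) (by linarith) (by linarith) hX hσX i
  rw [show X + (σ X + algebraMap K0 K2 μ - X) = σ X + algebraMap K0 K2 μ by ring] at hshift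
  have h1 : σ (truncPow p μ Ψ (∏ k ∈ range i, (X - (k : K2)))) - ∏ k ∈ range i, (X - (k : K2)) ∈
      hv2.filt (i * -b2 + p * b1) := by
    convert add_mem hU (hv2.filt_mono (by linarith) hshift) using 1
    simp [map_prod]
  have h2 := hv2.add_pow_sub_pow_mem_filt (by linarith) hx hσx j
  rw [add_sub_cancel] at h2
  have h3 : σ x ^ j ∈ hv2.filt (j * -(p * b1)) := hv2.pow_mem_filt (hσ _ _ hx) j
  have h4 := hv2.prod_sub_mem_filt (by linarith) hX i
  convert add_mem (hv2.mul_mem_filt (k := j * -(p * b1) + i * -b2 + p * b1) h3 h1 (by linarith))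
    (hv2.mul_mem_filt (k := j * -(p * b1) + i * -b2 + p * b1) h2 h4 (by linarith)) using 1
  simp only [LinearMap.sub_apply, Module.End.mul_apply, Module.End.one_apply, hUx,
    AlgEquiv.toLinearMap_apply, _root_.map_mul, _root_.map_pow]
  ring

/-- Gains of the monomials in the scaffold operators, with and without carries. -/
lemma pow_mul_pow_mem_raising (hv2 : IsDiscVal v2) {p : ℕ} {b1 b2 E G : ℤ}
    {Ψ1 Ψ2 : Module.End K0 K2} (hΨ1 : Ψ1 ∈ hv2.raising (p * b1)) (hΨ2 : Ψ2 ∈ hv2.raising b2)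
    (h2p : Ψ2 ^ p ∈ hv2.raising (E + b2)) (h1p : Ψ1 ^ p - Ψ2 ∈ hv2.raising G) (hG : b2 ≤ G)
    (hE1 : (p : ℤ) ^ 2 ≤ E - (p - 1) * b2)
    (hE2 : (p : ℤ) ^ 2 ≤ E - (p - 2) * b2 - (p : ℤ) ^ 2 * b1)
    (hG2 : (p : ℤ) ^ 2 ≤ G - (p : ℤ) ^ 2 * b1) (s t : ℕ) :
    Ψ2 ^ s * Ψ1 ^ t ∈ hv2.raising (s * b2 + t * (p * b1)) ∧
    (p ≤ t → Ψ2 ^ s * Ψ1 ^ t ∈ hv2.raising ((s + 1) * b2 + (t - p) * (p * b1))) ∧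
    (p ≤ s ∨ p ≤ s + 1 ∧ p ≤ t →
      Ψ2 ^ s * Ψ1 ^ t ∈ hv2.raising (s * b2 + t * (p * b1) + (p : ℤ) ^ 2)) := by
  have hsplit : p ≤ t → Ψ2 ^ s * Ψ1 ^ t =
      Ψ2 ^ (s + 1) * Ψ1 ^ (t - p) + Ψ2 ^ s * (Ψ1 ^ p - Ψ2) * Ψ1 ^ (t - p) := by
    intro h
    conv_lhs => rw [← Nat.add_sub_cancel' h, pow_add Ψ1]
    rw [mul_sub, sub_mul, pow_succ, ← mul_assoc]
    abel
  have hbase : ∀ s t : ℕ, Ψ2 ^ s * Ψ1 ^ t ∈ hv2.raising (s * b2 + t * (p * b1)) := fun s t =>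
    hv2.mul_mem_raising (hv2.pow_mem_raising hΨ2 s) (hv2.pow_mem_raising hΨ1 t) le_rfl
  have hcarry : ∀ s t : ℕ, p ≤ s →
      Ψ2 ^ s * Ψ1 ^ t ∈ hv2.raising (E + b2 + (s - p) * b2 + t * (p * b1)) := by
    intro s t h
    conv => rw [← Nat.add_sub_cancel' h, pow_add Ψ2, mul_assoc]
    refine hv2.mul_mem_raising h2p (hbase (s - p) t) ?_
    push_cast [Nat.cast_sub h]
    linarith
  have herr : p ≤ t → Ψ2 ^ s * (Ψ1 ^ p - Ψ2) * Ψ1 ^ (t - p) ∈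
      hv2.raising (s * b2 + G + (t - p) * (p * b1)) := by
    intro h
    refine hv2.mul_mem_raising (hv2.mul_mem_raising (hv2.pow_mem_raising hΨ2 s) h1p le_rfl)
      (hv2.pow_mem_raising hΨ1 (t - p)) ?_
    push_cast [Nat.cast_sub h]
    linarith
  refine ⟨hbase s t, fun h => ?_, fun h => ?_⟩
  · rw [hsplit h]
    refine add_mem (hv2.raising_mono ?_ (hbase (s + 1) (t - p)))
      (hv2.raising_mono (by linarith) (herr h))
    push_cast [Nat.cast_sub h]
    linarith
  · by_cases hs : p ≤ s
    · exact hv2.raising_mono (by linarith) (hcarry s t hs)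
    · obtain ⟨h1, h2⟩ := h.resolve_left hs
      have hsp : (s : ℤ) = p - 1 := by omega
      rw [hsplit h2]
      refine add_mem (hv2.raising_mono ?_ (hcarry (s + 1) (t - p) h1))
        (hv2.raising_mono (by linarith) (herr h2))
      push_cast [Nat.cast_sub h2]
      rw [hsp]
      linarith

end Scaffold

end IsDiscVal

set_option maxHeartbeats 2000000 in
open IsDiscVal in
/-- The scaffold operators raise valuations by `p * b1` and `b2`, and their `p`-th powers satisfy
the expected relations up to error terms. -/
lemma IsDiscVal.scaffold_raising
    {p : ℕ} (hp : p.Prime)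
    {K0 K2 : Type*} [Field K0] [Field K2] [CharZero K2]
    [Algebra K0 K2] [IsGalois K0 K2] [FiniteDimensional K0 K2]
    (hdeg : Module.finrank K0 K2 = p ^ 2) {v0 : K0 → ℤ} {v2 : K2 → ℤ}
    (hv0 : IsDiscVal v0) (hv2 : IsDiscVal v2)
    {e0 : ℤ} (he0 : v2 (p : K2) = (p : ℤ) ^ 2 * e0)
    (hram : ∀ x : K0, x ≠ 0 → v2 (algebraMap K0 K2 x) = (p : ℤ) ^ 2 * v0 x)
    {a1 μ : K0} (ha1 : a1 ≠ 0) (hμ0 : μ ≠ 0) {b1 b2 m : ℤ} (hb1 : v0 a1 = -b1)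
    (hnd : ¬ (p : ℤ) ∣ b1) (hb1pos : 0 < b1) (hbd : ((p : ℤ) ^ 2 - 1) * b1 < p * e0)
    (hm : v0 μ = -m) (hmpos : 0 < m) (hb2 : b2 = (p : ℤ) ^ 2 * m + b1)
    (hmu1 : ((p : ℤ) - 1) * b2 + (2 * (p : ℤ) ^ 2 - 3 * p + 2) * b1 < (p : ℤ) ^ 2 * e0)
    (hmu2 : (p : ℤ) ^ 2 * b1 < b2) {x1 x2 : K2}
    (hx1 : x1 ^ p - x1 = algebraMap K0 K2 a1)
    (hx2 : x2 ^ p - x2 = algebraMap K0 K2 (μ ^ p * a1) +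
      (x1 ^ p + (algebraMap K0 K2 a1) ^ p - (x1 + algebraMap K0 K2 a1) ^ p) / (p : K2))
    {σ : K2 ≃ₐ[K0] K2} {ε δ : K2} (hσx1 : σ x1 = x1 + 1 + ε)
    (hε : ε ∈ hv2.filt ((p : ℤ) ^ 2 * e0 - p * (p - 1) * b1))
    (hσx2 : σ x2 = x2 + (x1 ^ p + 1 - (x1 + 1) ^ p) / (p : K2) + δ) (hδ : δ ∈ hv2.filt 1)
    {Ψ1 Ψ2 : Module.End K0 K2}
    (hΨ2 : Ψ2 = ((σ ^ p).toLinearMap : Module.End K0 K2) - 1)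
    (hΨ1 : Ψ1 = (σ.toLinearMap : Module.End K0 K2) * truncPow p μ Ψ2 - 1) {G : ℤ}
    (hG1 : G ≤ (p : ℤ) ^ 2 * e0) (hG2 : G ≤ (p : ℤ) ^ 2 * e0 - (p - 1) * b2 + p * b1) :
    Ψ1 ∈ hv2.raising (p * b1) ∧ Ψ2 ∈ hv2.raising b2 ∧
      Ψ2 ^ p ∈ hv2.raising ((p : ℤ) ^ 2 * e0 + b2) ∧ Ψ1 ^ p - Ψ2 ∈ hv2.raising G ∧
      Commute Ψ2 Ψ1 := by
  have hp2 : (2 : ℤ) ≤ p := by exact_mod_cast hp.two_le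
  have hp0 : (p : K2) ≠ 0 := by exact_mod_cast hp.ne_zero
  have hram' : ∀ x : K0, x ≠ 0 → v2 (algebraMap K0 K2 x) = ((p ^ 2 : ℕ) : ℤ) * v0 x := by
    exact_mod_cast hram
  have hσ : ∀ n, ∀ x ∈ hv2.filt n, σ x ∈ hv2.filt n := fun n x hx =>
    algEquiv_mem_filt hv0 hv2 hram' hdeg σ hx
  set E : ℤ := (p : ℤ) ^ 2 * e0 with hEdef
  have hE : (p : K2) ∈ hv2.filt E := hv2.mem_filt_of_le he0.ge
  have hpb : 2 * b1 ≤ p * b1 := by nlinarith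
  have hppb : 2 * (p * b1) ≤ (p : ℤ) ^ 2 * b1 := by nlinarith
  have hpppb : 2 * ((p : ℤ) ^ 2 * b1) ≤ (p : ℤ) ^ 3 * b1 := by nlinarith
  have hEb : (p : ℤ) ^ 3 * b1 - p * b1 < E := by nlinarith
  have hE1 : 1 ≤ E := by linarith
  have hcross : ∀ x y : K2, (x ^ p + y ^ p - (x + y) ^ p) / (p : K2) = -cross p x y := by
    intro x y
    rw [add_pow_eq_cross hp]
    field_simp
    ring
  have hσx2' : σ x2 = x2 - cross p x1 1 + δ := by
    have h := hcross x1 1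
    rw [one_pow] at h
    rw [hσx2, h]
    ring
  have ha1' : algebraMap K0 K2 a1 ≠ 0 := by simpa using ha1
  have hμ0' : algebraMap K0 K2 μ ≠ 0 := by simpa using hμ0
  have ha1v : v2 (algebraMap K0 K2 a1) = -((p : ℤ) ^ 2 * b1) := by rw [hram a1 ha1, hb1]; ring
  have hμv : v2 (algebraMap K0 K2 μ) = -((p : ℤ) ^ 2 * m) := by rw [hram μ hμ0, hm]; ring
  have hμm : algebraMap K0 K2 μ ∈ hv2.filt (b1 - b2) := hv2.mem_filt_of_le (by linarith)
  obtain ⟨hx10, hx1v⟩ := hv2.map_eq_of_pow_sub hp.two_le (n := -(p * b1)) (by linarith) hx1 ha1'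
    (by rw [ha1v]; ring)
  have hx1m : x1 ∈ hv2.filt (-(p * b1)) := hv2.mem_filt_of_le hx1v.ge
  rw [hcross, _root_.map_mul, _root_.map_pow, ← sub_eq_add_neg] at hx2
  obtain ⟨hx2m, hX0, hXv⟩ := hv2.map_sub_mul_eq hp hE hb1pos hmpos (by linarith) (by linarith)
    ha1v hμ0' hμv hx1 hx10 hx1v hx2
  rw [← hb2] at hXv
  set X := x2 - algebraMap K0 K2 μ * x1 with hX
  have hXm : X ∈ hv2.filt (-b2) := hv2.mem_filt_of_le hXv.ge
  -- the action of `σ ^ p` on the generators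
  have hfix1 : (σ ^ p) x1 = x1 :=
    hv2.pow_prime_apply_eq_self hp hE (b := p * b1) (by linarith) (by linarith) hσ hx1m
      (by rw [hx1, AlgEquiv.commutes]) hσx1 (hv2.filt_mono (by linarith) hε)
  have he0b : b1 + 1 ≤ e0 := by
    by_contra! h
    nlinarith [mul_le_mul_of_nonneg_left (show e0 ≤ b1 by omega) (show (0 : ℤ) ≤ p by omega)]
  have hεE : 1 ≤ p * (E - p * (p - 1) * b1) - E := by
    have h : p * (E - p * (p - 1) * b1) - E = (p : ℤ) ^ 2 * ((p - 1) * (e0 - b1)) := by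
      rw [hEdef]; ring
    rw [h]
    have h1 : 1 ≤ ((p : ℤ) - 1) * (e0 - b1) := by nlinarith
    nlinarith
  have hη1 : (σ ^ p) x2 - x2 - 1 ∈ hv2.filt 1 :=
    hv2.pow_prime_apply_sub_sub_one_mem hp hp0 he0 (b := p * b1) (by linarith) (by linarith)
      (by linarith) hεE hσ hx1m hσx1 hε hfix1 hσx2' hδ
  have hη2 : (σ ^ p) x2 - x2 - 1 ∈ hv2.filt (((p : ℤ) - 1) * b1) := by
    refine hv2.filt_mono ?_ (hv2.apply_sub_sub_one_mem hp hE hE1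
      (B := (p : ℤ) ^ 2 * m + p * b1) (by nlinarith) hx2m ?_ hη1)
    · rw [show (p : ℤ) ^ 2 * m = b2 - b1 by rw [hb2]; ring]
      linarith
    · rw [hx2]
      simp [map_cross, hfix1, -AlgEquiv.coe_pow]
  have hη : (σ ^ p) X - X - 1 ∈ hv2.filt (((p : ℤ) - 1) * b1) := by
    convert hη2 using 1
    rw [hX, map_sub, _root_.map_mul, AlgEquiv.commutes, hfix1]
    ring
  -- the second operator
  have hb2pos : 0 < b2 := by linarith
  have hstep := hv2.sub_one_apply_prod_sub_mem hb2pos.le (by linarith) hXm hη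
  rw [← hΨ2] at hstep
  have hΨ2x : ∀ (j : ℕ) (y : K2), Ψ2 (x1 ^ j * y) = x1 ^ j * Ψ2 y := by
    intro j y
    rw [hΨ2, LinearMap.sub_apply, LinearMap.sub_apply, AlgEquiv.toLinearMap_apply,
      AlgEquiv.toLinearMap_apply, _root_.map_mul, _root_.map_pow, hfix1, mul_sub,
      Module.End.one_apply, Module.End.one_apply]
  have hΨ2r : Ψ2 ∈ hv2.raising b2 :=
    mem_raising_of_mul_prod hp hdeg hv2 hram' hnd hb2 hb2pos hx10 hx1v hX0 hXv fun i j _ =>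
      hv2.mul_prod_mem_filt_of_step hb2pos.le (by linarith) hx1m hXm hΨ2x hstep i j
  -- the first operator
  have hσX : σ X + algebraMap K0 K2 μ - X ∈ hv2.filt (-b2 + p * b1) := by
    have h : σ X + algebraMap K0 K2 μ - X = -cross p x1 1 + δ - algebraMap K0 K2 μ * ε := by
      rw [hX, map_sub, _root_.map_mul, AlgEquiv.commutes, hσx1, hσx2']
      ring
    rw [h]
    refine sub_mem (add_mem (neg_mem ?_) (hv2.filt_mono (by linarith) hδ)) ?_
    · exact hv2.cross_mem_filt p hx1m hv2.one_mem_filt (by linarith) (by linarith)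
    · exact hv2.mul_mem_filt hμm hε (by linarith)
  have hσx : σ x1 - x1 ∈ hv2.filt 0 := by
    rw [hσx1, show x1 + 1 + ε - x1 = 1 + ε by ring]
    exact add_mem hv2.one_mem_filt (hv2.filt_mono (by linarith) hε)
  have hΨ1r : Ψ1 ∈ hv2.raising (p * b1) := by
    refine mem_raising_of_mul_prod hp hdeg hv2 hram' hnd hb2 hb2pos hx10 hx1v hX0 hXv
      fun i j hi => ?_
    rw [hΨ1]
    exact hv2.mul_truncPow_sub_one_apply_mem hp (hv2.filt_mono hE1 hE) hb1pos.le (by linarith)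
      le_rfl hμm hσ hx1m hσx hXm hσX hΨ2x hΨ2r hstep hi j
  have hpow : ∀ (τ : K2 ≃ₐ[K0] K2) (k : ℕ),
      (τ.toLinearMap : Module.End K0 K2) ^ k = (τ ^ k).toLinearMap := by
    intro τ k
    induction k with
    | zero => rfl
    | succ k ih => rw [pow_succ, ih, pow_succ]; rfl
  have hone : (1 : Module.End K0 K2) + Ψ2 = (σ ^ p).toLinearMap := by rw [hΨ2, add_sub_cancel]
  have hσpp : (σ ^ p) ^ p = 1 := by
    rw [← pow_mul, ← sq, ← hdeg, ← IsGalois.card_aut_eq_finrank]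
    exact pow_card_eq_one'
  exact ⟨hΨ1r, hΨ2r, hv2.pow_prime_sub_mem_raising hp hE hE1 hb1pos.le (by linarith)
    (g := p * b1) (by linarith) hG1 hG2 hμm (by rw [hpow, hone])
    (by rw [hone, hpow, hσpp]; rfl) hΨ2r hΨ1 hΨ1r⟩

set_option maxHeartbeats 2000000 in
/-- Proposition 4.3: if `p²e₀ − (p+1)b₂ + (p−1)b₁ > 0` then
`π₀^{−w_j}·Ψ^{(j)}·ρ_r ∈ 𝔒₂` for all `0 ≤ r, j < p²`. -/
theorem statement16
    (p : ℕ) (hp : p.Prime)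
    (K0 K2 : Type*) [Field K0] [Field K2] [CharZero K0] [CharZero K2]
    [Algebra K0 K2] [IsGalois K0 K2] [FiniteDimensional K0 K2]
    (hdeg : Module.finrank K0 K2 = p ^ 2)
    (hcyc : IsCyclic (K2 ≃ₐ[K0] K2))
    (v0 : K0 → ℤ) (v2 : K2 → ℤ)
    (hv0 : IsDiscVal v0) (hv2 : IsDiscVal v2)
    (e0 : ℤ) (he0 : e0 = v0 (p : K0)) (he0pos : 1 ≤ e0)
    (hram : ∀ x : K0, x ≠ 0 → v2 (algebraMap K0 K2 x) = (p : ℤ) ^ 2 * v0 x)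
    (a1 μ a2 : K0) (ha1 : a1 ≠ 0) (hμ0 : μ ≠ 0)
    (hwitt : ∀ y : K0, y ^ p - y ≠ a1)
    (hnd : ¬ ((p : ℤ) ∣ v0 a1))
    (hneg : v0 a1 < 0)
    (hbd : -((p : ℤ) * e0) < ((p : ℤ) ^ 2 - 1) * v0 a1)
    (m : ℤ) (hm : m = -v0 μ) (hmpos : 0 < m)
    (hmu1 : (p : ℤ) ^ 2 * (p - 1) * m - (2 * p * (p - 1) + 1) * v0 a1 < (p : ℤ) ^ 2 * e0)
    (hmu2 : -(((p : ℤ) ^ 2 - 1) * v0 a1) < (p : ℤ) ^ 2 * m)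
    (ha2 : a2 = μ ^ p * a1)
    (x1 x2 : K2)
    (hx1 : x1 ^ p - x1 = algebraMap K0 K2 a1)
    (hx2 : x2 ^ p - x2 = algebraMap K0 K2 a2 +
      (x1 ^ p + (algebraMap K0 K2 a1) ^ p - (x1 + algebraMap K0 K2 a1) ^ p) / (p : K2))
    (hgen : Algebra.adjoin K0 {x1, x2} = ⊤)
    (b1 b2 : ℤ) (hb1 : b1 = -v0 a1) (hb2 : b2 = (p : ℤ) ^ 2 * m + b1)
    (σ1 : K2 ≃ₐ[K0] K2) (ε δ' : K2)
    (hσ1x1 : σ1 x1 = x1 + 1 + ε)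
    (hε : ε ≠ 0) (hεv : v2 ε = (p : ℤ) ^ 2 * e0 - p * (p - 1) * b1)
    (hσ1x2 : σ1 x2 = x2 + (x1 ^ p + 1 - (x1 + 1) ^ p) / (p : K2) + δ')
    (hδ' : δ' = 0 ∨ 0 < v2 δ')
    (Ψ1 Ψ2 : Module.End K0 K2)
    (hΨ2 : Ψ2 = ((σ1 ^ p).toLinearMap : Module.End K0 K2) - 1)
    (hΨ1 : Ψ1 = (σ1.toLinearMap : Module.End K0 K2) *
      (∑ i ∈ Finset.range p,
        ((∏ k ∈ Finset.range i, (μ - (k : K0))) / (Nat.factorial i : K0)) • Ψ2 ^ i) - 1)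
    (π0 : K0) (hπ0 : π0 ≠ 0) (hπ0v : v0 π0 = 1)
    (ρ0 : K2) (hρ0 : ρ0 ≠ 0) (hρ0v : v2 ρ0 = b2 % (p : ℤ) ^ 2)
    (d : ℕ → ℤ)
    (hd : ∀ a : ℕ, a < p ^ 2 →
      d a = Int.fdiv ((1 + ((a / p : ℕ) : ℤ)) * b2 + ((a % p : ℕ) : ℤ) * (p : ℤ) * b1)
        ((p : ℤ) ^ 2))
    (Ψf : ℕ → Module.End K0 K2)
    (hΨf : ∀ a : ℕ, Ψf a = if a < p ^ 2 then Ψ2 ^ (a / p) * Ψ1 ^ (a % p) else 0)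
    (ρ : K2) (hρ : ρ = algebraMap K0 K2 (π0 ^ d 0) * ρ0)
    (ρf : ℕ → K2) (hρf : ∀ a : ℕ, ρf a = algebraMap K0 K2 (π0 ^ (-d a)) * Ψf a ρ)
    (wj : ℕ → ℤ)
    (hwj : ∀ j : ℕ, j < p ^ 2 →
      IsLeast {x : ℤ | ∃ a : ℕ, a < p ^ 2 - j ∧ x = d (j + a) - d a} (wj j))
    (hbig : 0 < (p : ℤ) ^ 2 * e0 - (p + 1) * b2 + (p - 1) * b1) :
    ∀ j r : ℕ, j < p ^ 2 → r < p ^ 2 →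
      (algebraMap K0 K2 (π0 ^ (-wj j)) * Ψf j (ρf r) = 0 ∨
        0 ≤ v2 (algebraMap K0 K2 (π0 ^ (-wj j)) * Ψf j (ρf r))) := by
  intro j r hj hr
  have hp2 : (2 : ℤ) ≤ p := by exact_mod_cast hp.two_le
  have hpZ : (0 : ℤ) < (p : ℤ) ^ 2 := by positivity
  have hb1pos : 0 < b1 := by omega
  have hpK0 : (p : K0) ≠ 0 := by exact_mod_cast hp.ne_zero
  have hva : v0 a1 = -b1 := by omega
  have hb2b1 : (p : ℤ) ^ 2 * b1 < b2 := by rw [hva] at hmu2; linarith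
  have hpb : 2 * b1 ≤ p * b1 := by nlinarith
  have hppb : 2 * (p * b1) ≤ (p : ℤ) ^ 2 * b1 := by nlinarith
  have hb2p : (p : ℤ) ^ 2 + b1 ≤ b2 := by nlinarith
  have hpb2 : 2 * b2 ≤ p * b2 := by nlinarith
  obtain ⟨hr1, hr2, hr2p, hr1p, hcomm⟩ := IsDiscVal.scaffold_raising hp hdeg hv0 hv2 (e0 := e0)
    (by rw [he0, ← hram _ hpK0, map_natCast]) hram ha1 hμ0 hva
    (by rwa [hva, dvd_neg] at hnd) hb1pos (by rw [hva] at hbd; linarith) (by omega) hmpos hb2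
    (by linarith) hb2b1 hx1 (ha2 ▸ hx2) hσ1x1 (hv2.mem_filt_of_le hεv.ge)
    hσ1x2 (hδ'.imp id fun h => h) hΨ2 hΨ1
    (G := (p : ℤ) ^ 2 * e0 - (p - 1) * b2 + p * b1) (by linarith) le_rfl
  set E : ℤ := (p : ℤ) ^ 2 * e0 with hE
  obtain ⟨hno, hcarry, hover⟩ := hv2.pow_mul_pow_mem_raising hr1 hr2 hr2p hr1p
    (by linarith) (by linarith) (by linarith) (by linarith) (j / p + r / p) (j % p + r % p)
  set T : Module.End K0 K2 := Ψ2 ^ (j / p + r / p) * Ψ1 ^ (j % p + r % p) with hTdef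
  have hdle : ∀ a < p ^ 2, (p : ℤ) ^ 2 * d a ≤
      (1 + ((a / p : ℕ) : ℤ)) * b2 + ((a % p : ℕ) : ℤ) * (p : ℤ) * b1 := by
    intro a ha
    rw [hd a ha, Int.fdiv_eq_ediv_of_nonneg _ hpZ.le]
    exact Int.mul_ediv_self_le hpZ.ne'
  have hd0 : d 0 = b2 / (p : ℤ) ^ 2 := by
    rw [hd 0 (pow_pos hp.pos 2), Int.fdiv_eq_ediv_of_nonneg _ hpZ.le]
    simp
  have hd0lt : b2 < (p : ℤ) ^ 2 * d 0 + (p : ℤ) ^ 2 := by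
    rw [hd0]
    exact Int.lt_mul_ediv_self_add hpZ
  have hπpow : ∀ k : ℤ, algebraMap K0 K2 (π0 ^ k) ∈ hv2.filt ((p : ℤ) ^ 2 * k) := fun k =>
    hv2.mem_filt_of_le (by rw [hram _ (zpow_ne_zero k hπ0), hv0.map_zpow hπ0, hπ0v, mul_one])
  have hρm : ρ ∈ hv2.filt b2 := by
    rw [hρ]
    refine hv2.mul_mem_filt (hπpow _) (hv2.mem_filt_of_le hρ0v.ge) ?_
    rw [hd0, Int.mul_ediv_add_emod]
  have heq : algebraMap K0 K2 (π0 ^ (-wj j)) * Ψf j (ρf r) =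
      algebraMap K0 K2 (π0 ^ (-wj j)) * (algebraMap K0 K2 (π0 ^ (-d r)) * T ρ) := by
    have hT : T = Ψf j * Ψf r := by
      rw [hΨf j, hΨf r, if_pos hj, if_pos hr, hTdef, pow_add, pow_add,
        (hcomm.pow_pow (r / p) (j % p)).mul_mul_mul_comm]
    rw [hρf, ← Algebra.smul_def (π0 ^ (-d r)), map_smul, hT, Module.End.mul_apply,
      Algebra.smul_def]
  have finish : ∀ c : ℤ, T ∈ hv2.raising c → (p : ℤ) ^ 2 * (wj j + d r) ≤ b2 + c →
      algebraMap K0 K2 (π0 ^ (-wj j)) * Ψf j (ρf r) ∈ hv2.filt 0 := by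
    intro c hc h
    rw [heq]
    exact hv2.mul_mem_filt (hπpow _) (hv2.mul_mem_filt (hπpow _) (hc _ _ hρm) le_rfl)
      (by linarith)
  have hw : ∀ a, a < p ^ 2 - j → wj j ≤ d (j + a) - d a := fun a ha => (hwj j hj).2 ⟨a, ha, rfl⟩
  by_cases hjr : j + r < p ^ 2
  · have hdjr := hdle (j + r) hjr
    have hwr := hw r (by omega)
    have hle : (p : ℤ) ^ 2 * (wj j + d r) ≤ (p : ℤ) ^ 2 * d (j + r) :=
      mul_le_mul_of_nonneg_left (by linarith) hpZ.le
    by_cases hdig : p ≤ j % p + r % p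
    · refine finish _ (hcarry hdig) (hle.trans (hdjr.trans ?_))
      have hmod := Nat.add_mod_add_of_le_add_mod hdig
      have hmod' : (((j + r) % p : ℕ) : ℤ) = (j % p + r % p : ℕ) - p := by omega
      rw [Nat.add_div hp.pos, if_pos hdig, hmod']
      push_cast
      linarith
    · refine finish _ hno (hle.trans (hdjr.trans ?_))
      rw [Nat.add_div hp.pos, if_neg hdig, Nat.add_mod_of_add_mod_lt (by omega)]
      push_cast
      linarith
  · refine finish _ (hover ?_) ?_
    · have h : p ≤ (j + r) / p := by
        rw [Nat.le_div_iff_mul_le hp.pos, ← sq]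
        omega
      rw [Nat.add_div hp.pos] at h
      split_ifs at h with hdig
      · exact Or.inr ⟨h, hdig⟩
      · exact Or.inl h
    · have hw0 := hw 0 (by omega)
      rw [add_zero] at hw0
      have h1 := hdle j hj
      have h2 := hdle r hr
      have h3 : (p : ℤ) ^ 2 * (wj j + d r) ≤ (p : ℤ) ^ 2 * (d j - d 0 + d r) :=
        mul_le_mul_of_nonneg_left (by linarith) hpZ.le
      push_cast at h1 h2 ⊢
      linarith
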